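/- Let I and P be positive integers, let η, L > 0 satisfy η ≤ 1/(60·L·I·P), and set q₁ = 18·η²·L²·I and q₂ = 15·η²·L²·I·P. Fix an integer s with 0 ≤ s ≤ P−1 and define β_{s,t} for s·I ≤ t ≤ I·P by: β_{s,s·I} = 0, and for s·I ≤ t < I·P, β_{s,t+1} = (1 + 1/(I·P))·β_{s,t} + 𝟙{s = r_t}·(q₂/P)·((1 + 1/I)^{k_t} − 1) + q₁·q₂·Σ_{i=0}^{k_t−2} (1 + 1/I)^i·β_{s,t−1−i} (empty sums being zero). Then β_{s,t} ≤ 12·q₂·I/P for all s·I ≤ t ≤ I·P. -/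

import Mathlib

open Finset

/-!
Put `c = q₂ / P`, `q = q₁ * q₂` and `T = I * P`.
As long as `β ≤ B := 12 * c * I` holds, the forcing in the recurrence is at most `2 * c` during
the single block of `I` steps on which the indicator is active, plus a memory term of at most
`3 * q * I * B` at each step: both use `(1 + 1 / I) ^ k ≤ exp 1 < 3` for `k ≤ I`. Over a horizon
of `T` steps the forcing adds up to at most `2 * c * I + 3 * q * I * T * B ≤ B / 3` when
`18 * q * I * T ≤ 1`, and the growth factors `1 + 1 / T` multiply it by at most `exp 1 < 3`.
Hence the discrete Grönwall inequality propagates the bound `β ≤ B`.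
-/

theorem one_add_one_div_pow_le_three {m k : ℕ} (hk : k ≤ m) : (1 + 1 / (m : ℝ)) ^ k ≤ 3 := by
  calc (1 + 1 / (m : ℝ)) ^ k
    _ ≤ Real.exp (1 / m) ^ k := by
        gcongr
        rw [add_comm]
        exact Real.add_one_le_exp _
    _ = Real.exp (k / m) := by rw [← Real.exp_nat_mul, mul_one_div]
    _ ≤ Real.exp 1 := by
        gcongr
        exact div_le_one_of_le₀ (mod_cast hk) m.cast_nonneg
    _ ≤ 3 := Real.exp_one_lt_three.le

theorem discrete_gronwall_of_mem_Ico {u b c : ℕ → ℝ} {n₀ N : ℕ} (hN : n₀ ≤ N) (hu₀ : 0 ≤ u n₀)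
    (hu : ∀ n ∈ Ico n₀ N, u (n + 1) ≤ (1 + c n) * u n + b n)
    (hc : ∀ n ∈ Ico n₀ N, 0 ≤ c n) (hb : ∀ n ∈ Ico n₀ N, 0 ≤ b n) :
    u N ≤ (u n₀ + ∑ n ∈ Ico n₀ N, b n) * Real.exp (∑ n ∈ Ico n₀ N, c n) := by
  -- The sequence stopped at `N`, with coefficients cut off there, satisfies the recurrence forever.
  have stopped := discrete_gronwall (u := fun n ↦ u (min n N))
    (b := fun n ↦ if n < N then b n else 0) (c := fun n ↦ if n < N then c n else 0) (n₀ := n₀)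
    (by simpa only [min_eq_left hN]) (fun n hn ↦ ?_) (by grind) (by grind) hN
  · have cut_off (f : ℕ → ℝ) :
        ∑ n ∈ Ico n₀ N, (if n < N then f n else 0) = ∑ n ∈ Ico n₀ N, f n :=
      sum_congr rfl fun n hn ↦ if_pos (mem_Ico.mp hn).2
    simpa only [min_self, min_eq_left hN, cut_off] using stopped
  · rcases lt_or_ge n N with h | h
    · simpa [h, h.le, Nat.succ_le_of_lt h] using hu n (mem_Ico.mpr ⟨hn, h⟩)
    · simp [h, h.trans n.le_succ, h.not_gt]

theorem le_three_mul_of_le_one_add_one_div_mul_add {u b : ℕ → ℝ} {n₀ N T : ℕ} (hN : n₀ ≤ N)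
    (hT : N - n₀ ≤ T) (hu₀ : 0 ≤ u n₀)
    (hu : ∀ n ∈ Ico n₀ N, u (n + 1) ≤ (1 + 1 / (T : ℝ)) * u n + b n)
    (hb : ∀ n ∈ Ico n₀ N, 0 ≤ b n) :
    u N ≤ 3 * (u n₀ + ∑ n ∈ Ico n₀ N, b n) := by
  have growth_le : Real.exp (∑ _n ∈ Ico n₀ N, 1 / (T : ℝ)) ≤ 3 := by
    refine (Real.exp_le_exp.mpr ?_).trans Real.exp_one_lt_three.le
    rw [sum_const, nsmul_eq_mul, mul_one_div, Nat.card_Ico]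
    exact div_le_one_of_le₀ (mod_cast hT) T.cast_nonneg
  calc u N
    _ ≤ (u n₀ + ∑ n ∈ Ico n₀ N, b n) * Real.exp (∑ _n ∈ Ico n₀ N, 1 / (T : ℝ)) :=
        discrete_gronwall_of_mem_Ico hN hu₀ hu (fun _ _ ↦ by positivity) hb
    _ ≤ (u n₀ + ∑ n ∈ Ico n₀ N, b n) * 3 :=
        mul_le_mul_of_nonneg_left growth_le (add_nonneg hu₀ (sum_nonneg hb))
    _ = 3 * (u n₀ + ∑ n ∈ Ico n₀ N, b n) := mul_comm _ _

theorem card_filter_eq_div_le (A : Finset ℕ) (s : ℕ) {m : ℕ} (hm : 0 < m) :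
    #{u ∈ A | s = u / m} ≤ m := by
  have block : {u ∈ A | s = u / m} ⊆ Ico (s * m) (s * m + m) := fun u hu ↦ by
    have := (Nat.div_eq_iff hm).mp (mem_filter.mp hu).2.symm
    exact mem_Ico.mpr (by omega)
  simpa using card_le_card block

theorem sum_ite_eq_div_add_const_le (A : Finset ℕ) (s : ℕ) {m : ℕ} (hm : 0 < m) {a : ℝ}
    (ha : 0 ≤ a) (d : ℝ) :
    ∑ u ∈ A, ((if s = u / m then a else 0) + d) ≤ m * a + #A * d := by
  rw [sum_add_distrib, ← sum_filter, sum_const, sum_const, nsmul_eq_mul, nsmul_eq_mul]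
  gcongr
  exact card_filter_eq_div_le A s hm

theorem sum_one_add_one_div_pow_mul_le {m k : ℕ} {B : ℝ} {f : ℕ → ℝ} (hk : k ≤ m) (hB : 0 ≤ B)
    (hf : ∀ i < k, f i ≤ B) :
    ∑ i ∈ range k, (1 + 1 / (m : ℝ)) ^ i * f i ≤ 3 * m * B := by
  have term_le (i : ℕ) (hi : i ∈ range k) : (1 + 1 / (m : ℝ)) ^ i * f i ≤ 3 * B := by
    have hik := mem_range.mp hi
    calc (1 + 1 / (m : ℝ)) ^ i * f i
      _ ≤ (1 + 1 / (m : ℝ)) ^ i * B := by gcongr; exact hf i hik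
      _ ≤ 3 * B := by gcongr; exact one_add_one_div_pow_le_three (hik.le.trans hk)
  calc ∑ i ∈ range k, (1 + 1 / (m : ℝ)) ^ i * f i
    _ ≤ k * (3 * B) := by simpa using sum_le_card_nsmul _ _ _ term_le
    _ ≤ m * (3 * B) := by gcongr
    _ = 3 * m * B := by ring

section Recurrence

variable {I s : ℕ} {c q : ℝ}

theorem forcing_le {β : ℕ → ℝ} {B : ℝ} {t : ℕ} (hI : 0 < I) (hc : 0 ≤ c) (hq : 0 ≤ q)
    (hB : 0 ≤ B) (ht : s * I ≤ t) (hβ : ∀ u, s * I ≤ u → u ≤ t → β u ≤ B) :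
    (if s = t / I then c * ((1 + 1 / (I : ℝ)) ^ (t % I) - 1) else 0)
        + q * ∑ i ∈ range (t % I - 1), (1 + 1 / (I : ℝ)) ^ i * β (t - 1 - i)
      ≤ (if s = t / I then 2 * c else 0) + q * (3 * I * B) := by
  have hmod : t % I < I := Nat.mod_lt t hI
  have source_le : c * ((1 + 1 / (I : ℝ)) ^ (t % I) - 1) ≤ 2 * c := by
    rw [mul_comm 2 c]
    gcongr
    linarith [one_add_one_div_pow_le_three hmod.le]
  -- The memory never reaches back past the start of the current block.
  have block_start : s * I ≤ t - t % I := by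
    rw [← Nat.div_mul_self_eq_mod_sub_self]
    exact Nat.mul_le_mul_right I ((Nat.le_div_iff_mul_le hI).mpr ht)
  have memory_le : ∑ i ∈ range (t % I - 1), (1 + 1 / (I : ℝ)) ^ i * β (t - 1 - i) ≤ 3 * I * B :=
    sum_one_add_one_div_pow_mul_le (by omega) hB fun i hi ↦ hβ _ (by omega) (by omega)
  gcongr
  split_ifs
  exacts [source_le, le_rfl]

theorem beta_coefficient_bound_general {T : ℕ} {β : ℕ → ℝ} (hI : 0 < I) (hc : 0 ≤ c)
    (hq : 0 ≤ q) (hqT : 18 * q * I * T ≤ 1) (hβ0 : β (s * I) = 0)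
    (hβrec : ∀ t, s * I ≤ t → t < T →
      β (t + 1) ≤ (1 + 1 / (T : ℝ)) * β t
        + (if s = t / I then c * ((1 + 1 / (I : ℝ)) ^ (t % I) - 1) else 0)
        + q * ∑ i ∈ range (t % I - 1), (1 + 1 / (I : ℝ)) ^ i * β (t - 1 - i)) :
    ∀ t, s * I ≤ t → t ≤ T → β t ≤ 12 * c * I := by
  intro t
  induction t using Nat.strong_induction_on with | _ t ih
  intro hst htT
  let b (u : ℕ) : ℝ := (if s = u / I then 2 * c else 0) + q * (3 * I * (12 * c * I))
  have hb (u : ℕ) : 0 ≤ b u := by positivity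
  have step (u : ℕ) (hu : u ∈ Ico (s * I) t) : β (u + 1) ≤ (1 + 1 / (T : ℝ)) * β u + b u := by
    obtain ⟨hsu, hut⟩ := mem_Ico.mp hu
    have := forcing_le (B := 12 * c * I) hI hc hq (by positivity) hsu
      fun v hsv hvu ↦ ih v (by omega) hsv (by omega)
    linarith [hβrec u hsu (by omega)]
  have steps_le : t - s * I ≤ T := (t.sub_le _).trans htT
  have total_le : ∑ u ∈ Ico (s * I) t, b u ≤ 4 * c * I := by
    calc ∑ u ∈ Ico (s * I) t, b u
      _ ≤ I * (2 * c) + #(Ico (s * I) t) * (q * (3 * I * (12 * c * I))) :=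
          sum_ite_eq_div_add_const_le _ s hI (by positivity) _
      _ ≤ I * (2 * c) + T * (q * (3 * I * (12 * c * I))) := by
          rw [Nat.card_Ico]
          gcongr
      _ = 2 * c * I + 18 * q * I * T * (2 * c * I) := by ring
      _ ≤ 2 * c * I + 1 * (2 * c * I) := by gcongr
      _ = 4 * c * I := by ring
  calc β t
    _ ≤ 3 * (β (s * I) + ∑ u ∈ Ico (s * I) t, b u) :=
        le_three_mul_of_le_one_add_one_div_mul_add hst steps_le hβ0.ge step fun u _ ↦ hb u
    _ ≤ 3 * (4 * c * I) := by
        rw [hβ0, zero_add]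
        gcongr
    _ = 12 * c * I := by ring

end Recurrence

theorem memory_weight_mul_horizon_le_one {η L I P : ℝ}
    (hη : 0 ≤ η) (hL : 0 < L) (hI : 0 < I) (hP : 1 ≤ P)
    (hηle : η ≤ 1 / (60 * L * I * P)) :
    18 * (18 * η ^ 2 * L ^ 2 * I * (15 * η ^ 2 * L ^ 2 * I * P)) * I * (I * P) ≤ 1 := by
  have small : η * L * I * P ≤ 1 / 60 := by
    rw [le_div_iff₀ (by positivity)] at hηle
    linarith
  calc 18 * (18 * η ^ 2 * L ^ 2 * I * (15 * η ^ 2 * L ^ 2 * I * P)) * I * (I * P)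
    _ = 4860 * ((η * L * I) ^ 4 * P ^ 2) := by ring
    _ ≤ 4860 * ((η * L * I) ^ 4 * P ^ 4) := by
        gcongr
        norm_num
    _ = 4860 * (η * L * I * P) ^ 4 := by ring
    _ ≤ 4860 * (1 / 60) ^ 4 := by gcongr
    _ ≤ 1 := by norm_num

/-- Bound on the auxiliary coefficients `β_{s,t}` from the proof of Lemma 1
(Amplified SCAFFOLD).  Here `r_t = t / I` and `k_t = t % I`. -/
theorem beta_coefficient_bound
    (I P : ℕ) (hI : 0 < I) (hP : 0 < P)
    (η L : ℝ) (hη : 0 < η) (hL : 0 < L)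
    (hηle : η ≤ 1 / (60 * L * I * P))
    (q₁ q₂ : ℝ)
    (hq₁ : q₁ = 18 * η ^ 2 * L ^ 2 * I)
    (hq₂ : q₂ = 15 * η ^ 2 * L ^ 2 * I * P)
    (s : ℕ) (hs : s < P)
    (β : ℕ → ℝ)
    (hβ0 : β (s * I) = 0)
    (hβrec : ∀ t, s * I ≤ t → t < I * P →
      β (t + 1) = (1 + 1 / ((I : ℝ) * P)) * β t
        + (if s = t / I then (q₂ / P) * ((1 + 1 / (I : ℝ)) ^ (t % I) - 1) else 0)
        + q₁ * q₂ * ∑ i ∈ Finset.range (t % I - 1),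
            (1 + 1 / (I : ℝ)) ^ i * β (t - 1 - i)) :
    ∀ t, s * I ≤ t → t ≤ I * P → β t ≤ 12 * q₂ * I / P := by
  have memory_small : 18 * (q₁ * q₂) * I * (I * P : ℕ) ≤ 1 := by
    rw [hq₁, hq₂, Nat.cast_mul]
    exact memory_weight_mul_horizon_le_one hη.le hL (mod_cast hI) (mod_cast hP) hηle
  have hq₁_nonneg : 0 ≤ q₁ := by rw [hq₁]; positivity
  have hq₂_nonneg : 0 ≤ q₂ := by rw [hq₂]; positivity
  rw [mul_div_right_comm, mul_div_assoc]
  exact beta_coefficient_bound_general hI (by positivity) (by positivity) memory_small hβ0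
    fun t hst ht ↦ by simpa only [Nat.cast_mul] using (hβrec t hst ht).le
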